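/- arXiv:1111.5864 — 4 statements merged into one kernel-verified Lean document; each statement's English description precedes it below -/
import Mathlib

section
/- Let G be a connected graph of order n ≥ 3 and let f : V(G₁) → V(G₂) be any function between two disjoint copies G₁, G₂ of G. Then the metric dimension of the functigraph C(G, f) satisfies dim(C(G, f)) ≤ 2n − 3. -/
/-- The functigraph `C(G, f)`: two disjoint copies of `G` (as `Sum.inl`/`Sum.inr`),
with an edge from each `Sum.inl u` to `Sum.inr (f u)`. -/
def functigraph {V : Type*} (G : SimpleGraph V) (f : V → V) : SimpleGraph (V ⊕ V) :=
  SimpleGraph.fromRel (fun x y =>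
    match x, y with
    | Sum.inl a, Sum.inl b => G.Adj a b
    | Sum.inr a, Sum.inr b => G.Adj a b
    | Sum.inl a, Sum.inr b => f a = b
    | Sum.inr _, Sum.inl _ => False)

/-- `S` is a resolving set of `H`: every pair of distinct vertices is resolved by some `w ∈ S`. -/
def IsResolving {V : Type*} (H : SimpleGraph V) (S : Set V) : Prop :=
  ∀ x y : V, x ≠ y → ∃ w ∈ S, H.dist x w ≠ H.dist y w

/-- The metric dimension of `H`: minimum cardinality of a (finite) resolving set. -/
noncomputable def metricDim {V : Type*} (H : SimpleGraph V) : ℕ :=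
  sInf {k | ∃ S : Set V, IsResolving H S ∧ S.Finite ∧ S.ncard = k}

/-- The cycle graph on `ZMod n` (for `n ≥ 3`): `i` is adjacent to `i ± 1`. -/
def cycGraph (n : ℕ) : SimpleGraph (ZMod n) :=
  SimpleGraph.fromRel (fun i j => j = i + 1)

/-- The closed neighborhood `N[S]` of a set `S` in `H`. -/
def closedNbhd {V : Type*} (H : SimpleGraph V) (S : Set V) : Set V :=
  S ∪ {x | ∃ s ∈ S, H.Adj x s}

/-!
Adjacency already resolves enough pairs: a set `S` whose complement consists of vertices with
distinct neighborhoods in `S` is resolving, so it suffices to find three vertices of `C(G, f)` with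
pairwise different neighborhoods outside the triple. Take an edge `ab` of `G`. If `f` collapses it
to `p`, the triple is `a`, `p` and any `q` in the second copy that is neither `p` nor a chosen
neighbor of `p`. Otherwise, as `n ≥ 3`, some edge leaves `{f a, f b}`, say from `f a`, and the
triple is `a`, `b`, `f a`.
-/

section Locating

variable {W : Type*} {H : SimpleGraph W}

/-- A locating set: distinct vertices outside `S` have distinct neighborhoods in `S`. Unlike for
locating-dominating sets, one vertex outside `S` may have no neighbor in `S`. Locating sets serve
as resolving sets that can be recognized without computing distances. -/
def IsLocating (H : SimpleGraph W) (S : Set W) : Prop :=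
  Sᶜ.Pairwise fun x y => ∃ w ∈ S, ¬(H.Adj x w ↔ H.Adj y w)

theorem isLocating_compl_triple {u v w : W}
    (huv : ∃ z ∈ ({u, v, w} : Set W)ᶜ, ¬(H.Adj u z ↔ H.Adj v z))
    (huw : ∃ z ∈ ({u, v, w} : Set W)ᶜ, ¬(H.Adj u z ↔ H.Adj w z))
    (hvw : ∃ z ∈ ({u, v, w} : Set W)ᶜ, ¬(H.Adj v z ↔ H.Adj w z)) :
    IsLocating H {u, v, w}ᶜ := by
  have : Std.Symm fun x y => ∃ z ∈ ({u, v, w} : Set W)ᶜ, ¬(H.Adj x z ↔ H.Adj y z) :=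
    ⟨fun _ _ ⟨z, hz, h⟩ => ⟨z, hz, mt Iff.symm h⟩⟩
  rw [IsLocating, compl_compl, Set.pairwise_insert_of_symm, Set.pairwise_pair_of_symm]
  refine ⟨fun _ => hvw, ?_⟩
  rintro _ (rfl | rfl) _
  exacts [huv, huw]

theorem IsLocating.isResolving {S : Set W} (hS : IsLocating H S) (hH : H.Connected) :
    IsResolving H S := by
  intro x y hxy
  by_cases hx : x ∈ S
  · exact ⟨x, hx, by simpa using (hH.pos_dist_of_ne hxy.symm).ne⟩
  by_cases hy : y ∈ S
  · exact ⟨y, hy, by simpa using (hH.pos_dist_of_ne hxy).ne'⟩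
  obtain ⟨w, hw, hadj⟩ := hS hx hy hxy
  refine ⟨w, hw, fun hdist => hadj ?_⟩
  rw [← SimpleGraph.dist_eq_one_iff_adj, ← SimpleGraph.dist_eq_one_iff_adj, hdist]

end Locating

theorem IsResolving.metricDim_le_ncard {W : Type*} {H : SimpleGraph W} {S : Set W}
    (hS : IsResolving H S) (hfin : S.Finite) : metricDim H ≤ S.ncard :=
  Nat.sInf_le ⟨S, hS, hfin, rfl⟩

section Functigraph

variable {V : Type*} {G : SimpleGraph V} {f : V → V} {a b c q r : V}

@[simp]
theorem functigraph_adj_inl_inl :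
    (functigraph G f).Adj (Sum.inl a) (Sum.inl b) ↔ G.Adj a b := by
  simpa [functigraph, G.adj_comm b a] using SimpleGraph.Adj.ne

@[simp]
theorem functigraph_adj_inr_inr :
    (functigraph G f).Adj (Sum.inr a) (Sum.inr b) ↔ G.Adj a b := by
  simpa [functigraph, G.adj_comm b a] using SimpleGraph.Adj.ne

@[simp]
theorem functigraph_adj_inl_inr : (functigraph G f).Adj (Sum.inl a) (Sum.inr b) ↔ f a = b := by
  simp [functigraph]

@[simp]
theorem functigraph_adj_inr_inl : (functigraph G f).Adj (Sum.inr b) (Sum.inl a) ↔ f a = b := by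
  rw [SimpleGraph.adj_comm, functigraph_adj_inl_inr]

theorem functigraph_connected (hG : G.Connected) (f : V → V) : (functigraph G f).Connected := by
  let inrHom : G →g functigraph G f := ⟨Sum.inr, functigraph_adj_inr_inr.2⟩
  obtain ⟨v⟩ := hG.nonempty
  refine SimpleGraph.connected_iff_exists_forall_reachable _ |>.2 ⟨Sum.inr v, ?_⟩
  have reach_inr (b : V) : (functigraph G f).Reachable (Sum.inr v) (Sum.inr b) :=
    (hG.preconnected v b).map inrHom
  rintro (a | b)
  · exact (reach_inr (f a)).trans (functigraph_adj_inr_inl.2 rfl).reachable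
  · exact reach_inr b

theorem isLocating_functigraph_of_map_eq (hab : G.Adj a b) (hf : f a = f b)
    (hr : G.Adj (f a) r) (hq : f a ≠ q) (hrq : r ≠ q) :
    IsLocating (functigraph G f) {Sum.inl a, Sum.inr (f a), Sum.inr q}ᶜ := by
  have hbq : f b ≠ q := hf ▸ hq
  refine isLocating_compl_triple ⟨Sum.inr r, ?_, ?_⟩ ⟨Sum.inl b, ?_, ?_⟩ ⟨Sum.inl b, ?_, ?_⟩
  · simp [hr.ne', hrq]
  · simp [hr, hr.ne]
  · simp [hab.ne']
  · simp [hab, hbq]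
  · simp [hab.ne']
  · simp [hf, hbq]

theorem isLocating_functigraph_of_map_ne (hf : f a ≠ f b) (hc : G.Adj (f a) c)
    (hbc : f b ≠ c) :
    IsLocating (functigraph G f) {Sum.inl a, Sum.inl b, Sum.inr (f a)}ᶜ := by
  refine isLocating_compl_triple
    ⟨Sum.inr (f b), ?_, ?_⟩ ⟨Sum.inr c, ?_, ?_⟩ ⟨Sum.inr c, ?_, ?_⟩
  · simp [hf.symm]
  · simp [hf]
  · simp [hc.ne']
  · simp [hc, hc.ne]
  · simp [hc.ne']
  · simp [hc, hbc]

theorem exists_isLocating_functigraph_of_map_eq (hG : G.Connected) (hV : 3 ≤ ENat.card V)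
    (hab : G.Adj a b) (hf : f a = f b) :
    ∃ S, IsLocating (functigraph G f) S ∧ Sᶜ.ncard = 3 := by
  have : Nontrivial V := ⟨a, b, hab.ne⟩
  obtain ⟨r, hr⟩ := hG.preconnected.exists_adj_of_nontrivial (f a)
  obtain ⟨q, hqa, hqr⟩ := ENat.exists_ne_ne_of_three_le hV (f a) r
  refine ⟨_, isLocating_functigraph_of_map_eq hab hf hr hqa.symm hqr.symm, ?_⟩
  rw [compl_compl, Set.ncard_eq_three]
  exact ⟨_, _, _, by simp, by simp, by simpa using hqa.symm, rfl⟩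

theorem exists_isLocating_functigraph_of_map_ne (hG : G.Connected) (hV : 3 ≤ ENat.card V)
    (hf : f a ≠ f b) :
    ∃ S, IsLocating (functigraph G f) S ∧ Sᶜ.ncard = 3 := by
  have of_adj {a b c : V} (hf : f a ≠ f b) (hc : G.Adj (f a) c) (hbc : f b ≠ c) :
      ∃ S, IsLocating (functigraph G f) S ∧ Sᶜ.ncard = 3 := by
    refine ⟨_, isLocating_functigraph_of_map_ne hf hc hbc, ?_⟩
    rw [compl_compl, Set.ncard_eq_three]
    exact ⟨_, _, _, by simpa using ne_of_apply_ne f hf, by simp, by simp, rfl⟩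
  obtain ⟨r, hra, hrb⟩ := ENat.exists_ne_ne_of_three_le hV (f a) (f b)
  obtain ⟨p⟩ := hG.preconnected (f a) r
  obtain ⟨⟨⟨x, c⟩, hxc : G.Adj x c⟩, -, rfl | rfl, hc⟩ :=
    p.exists_boundary_dart {f a, f b} (by simp) (by simp [hra, hrb])
  · exact of_adj hf hxc fun h => hc (Or.inr h.symm)
  · exact of_adj hf.symm hxc fun h => hc (Or.inl h.symm)

end Functigraph

theorem stmt1_general {V : Type*} (G : SimpleGraph V) (hG : G.Connected)
    (hV : 3 ≤ ENat.card V) (f : V → V) :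
    ∃ S, IsResolving (functigraph G f) S ∧ Sᶜ.ncard = 3 := by
  suffices ∃ S, IsLocating (functigraph G f) S ∧ Sᶜ.ncard = 3 by
    obtain ⟨S, hS, hcard⟩ := this
    exact ⟨S, hS.isResolving (functigraph_connected hG f), hcard⟩
  have : Nontrivial V := (ENat.one_lt_card_iff_nontrivial V).1 (lt_of_lt_of_le (by norm_num) hV)
  obtain ⟨a⟩ := hG.nonempty
  obtain ⟨b, hab⟩ := hG.preconnected.exists_adj_of_nontrivial a
  by_cases hf : f a = f b
  · exact exists_isLocating_functigraph_of_map_eq hG hV hab hf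
  · exact exists_isLocating_functigraph_of_map_ne hG hV hf

theorem stmt1 {V : Type*} [Fintype V] (G : SimpleGraph V)
    (hG : G.Connected) (hn : 3 <= Fintype.card V) (f : V -> V) :
    metricDim (functigraph G f) <= 2 * Fintype.card V - 3 := by
  obtain ⟨S, hS, hcard⟩ := stmt1_general G hG (by simpa using hn) f
  grind [hS.metricDim_le_ncard S.toFinite, S.ncard_add_ncard_compl, Nat.card_sum,
    Nat.card_eq_fintype_card]
end

section
/- Let Kₙ be the complete graph of order n ≥ 3 and let σ : V(G₁) → V(G₂) be a bijection (permutation) between two disjoint copies G₁, G₂ of Kₙ. Then dim(C(Kₙ, σ)) = n − 1. -/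
/-!
Project `C(Kₙ, f)` onto its second copy by `f` on the first copy and the identity on the second.
A vertex resolves two vertices of the second copy only if it projects to one of them, so the
projection of a resolving set misses at most one vertex; this gives `n - 1` as a lower bound.

Conversely, if `f` is injective, then the second copy without one vertex `z` is resolving. Two
vertices in the same copy have distinct projections, one of which is not `z`, and it resolves them.
A vertex `u` of the first copy and a vertex `v` of the second are resolved by `v` if `v ≠ z`, and
otherwise by a third vertex of the second copy outside `{z, f u}`, at distances `2` and `1`.
-/

open Set Sum

variable {V : Type*}

namespace functigraph

section Adjacency

variable {G : SimpleGraph V} {f : V → V} {a b : V}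

@[simp]
theorem adj_inr_inr : (functigraph G f).Adj (inr a) (inr b) ↔ G.Adj a b := by
  simpa [functigraph, G.adj_comm b a] using SimpleGraph.Adj.ne

@[simp]
theorem adj_inl_inr : (functigraph G f).Adj (inl a) (inr b) ↔ f a = b := by
  simp [functigraph]

theorem dist_inr_inr_of_adj (h : G.Adj a b) : (functigraph G f).dist (inr a) (inr b) = 1 :=
  SimpleGraph.dist_eq_one_iff_adj.2 (adj_inr_inr.2 h)

theorem dist_inl_inr_self (f : V → V) (a : V) :
    (functigraph G f).dist (inl a) (inr (f a)) = 1 :=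
  SimpleGraph.dist_eq_one_iff_adj.2 (adj_inl_inr.2 rfl)

theorem dist_inl_inr_of_adj (h : G.Adj (f a) b) :
    (functigraph G f).dist (inl a) (inr b) = 2 := by
  have hcommon : inr (f a) ∈ (functigraph G f).commonNeighbors (inl a) (inr b) :=
    (SimpleGraph.mem_commonNeighbors _).2 ⟨adj_inl_inr.2 rfl, adj_inr_inr.2 h.symm⟩
  have hedist : (functigraph G f).edist (inl a) (inr b) = 2 :=
    SimpleGraph.edist_eq_two_iff.2 ⟨inl_ne_inr, adj_inl_inr.not.2 h.ne, _, hcommon⟩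
  simp [SimpleGraph.dist, hedist]

end Adjacency

section Complete

variable {f : V → V} {a b : V}

theorem dist_top_inr_inr (h : a ≠ b) : (functigraph ⊤ f).dist (inr a) (inr b) = 1 :=
  dist_inr_inr_of_adj h

theorem dist_top_inl_inr (h : f a ≠ b) : (functigraph ⊤ f).dist (inl a) (inr b) = 2 :=
  dist_inl_inr_of_adj h

theorem dist_top_inr_left_eq {w : V ⊕ V} (ha : Sum.elim f id w ≠ a) (hb : Sum.elim f id w ≠ b) :
    (functigraph ⊤ f).dist (inr a) w = (functigraph ⊤ f).dist (inr b) w := by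
  rw [SimpleGraph.dist_comm, SimpleGraph.dist_comm (u := inr b)]
  rcases w with c | c
  · rw [dist_top_inl_inr ha, dist_top_inl_inr hb]
  · rw [dist_top_inr_inr (a := c) ha, dist_top_inr_inr (a := c) hb]

theorem dist_top_inl_ne_of_ne (h : f a ≠ f b) :
    (functigraph ⊤ f).dist (inl a) (inr (f a)) ≠ (functigraph ⊤ f).dist (inl b) (inr (f a)) := by
  rw [dist_inl_inr_self, dist_top_inl_inr h.symm]
  decide

theorem dist_top_inr_ne_of_ne (h : a ≠ b) :
    (functigraph ⊤ f).dist (inr a) (inr a) ≠ (functigraph ⊤ f).dist (inr b) (inr a) := by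
  rw [SimpleGraph.dist_self, dist_top_inr_inr h.symm]
  decide

theorem exists_ne_dist_top_inl_ne (h : f a ≠ f b) (z : V) :
    ∃ c ≠ z, (functigraph ⊤ f).dist (inl a) (inr c) ≠ (functigraph ⊤ f).dist (inl b) (inr c) :=
  (h.ne_or_ne z).elim (fun ha ↦ ⟨f a, ha, dist_top_inl_ne_of_ne h⟩)
    fun hb ↦ ⟨f b, hb, (dist_top_inl_ne_of_ne h.symm).symm⟩

theorem exists_ne_dist_top_inr_ne (h : a ≠ b) (z : V) :
    ∃ c ≠ z, (functigraph ⊤ f).dist (inr a) (inr c) ≠ (functigraph ⊤ f).dist (inr b) (inr c) :=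
  (h.ne_or_ne z).elim (fun ha ↦ ⟨a, ha, dist_top_inr_ne_of_ne h⟩)
    fun hb ↦ ⟨b, hb, (dist_top_inr_ne_of_ne h.symm).symm⟩

theorem dist_top_inl_ne_dist_top_inr_self (f : V → V) (a b : V) :
    (functigraph ⊤ f).dist (inl a) (inr b) ≠ (functigraph ⊤ f).dist (inr b) (inr b) := by
  rw [SimpleGraph.dist_self]
  obtain rfl | h := eq_or_ne (f a) b
  · simp [dist_inl_inr_self]
  · simp [dist_top_inl_inr h]

theorem exists_ne_dist_top_inl_ne_dist_top_inr (hV : 3 ≤ ENat.card V) (f : V → V) (a b z : V) :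
    ∃ c ≠ z, (functigraph ⊤ f).dist (inl a) (inr c) ≠ (functigraph ⊤ f).dist (inr b) (inr c) := by
  obtain rfl | hbz := eq_or_ne b z
  · obtain ⟨c, hcb, hca⟩ := ENat.exists_ne_ne_of_three_le hV b (f a)
    refine ⟨c, hcb, ?_⟩
    rw [dist_top_inl_inr hca.symm, dist_top_inr_inr hcb.symm]
    decide
  · exact ⟨b, hbz, dist_top_inl_ne_dist_top_inr_self f a b⟩

theorem isResolving_image_inr_compl_singleton (hV : 3 ≤ ENat.card V) (hf : f.Injective) (z : V) :
    IsResolving (functigraph ⊤ f) (inr '' {z}ᶜ) := by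
  rintro (a | a) (b | b) hab <;> rw [exists_mem_image]
  · exact exists_ne_dist_top_inl_ne (hf.ne (ne_of_apply_ne inl hab)) z
  · exact exists_ne_dist_top_inl_ne_dist_top_inr hV f a b z
  · obtain ⟨c, hcz, hc⟩ := exists_ne_dist_top_inl_ne_dist_top_inr hV f b a z
    exact ⟨c, hcz, hc.symm⟩
  · exact exists_ne_dist_top_inr_ne (ne_of_apply_ne inr hab) z

theorem subsingleton_compl_image_of_isResolving {S : Set (V ⊕ V)}
    (hS : IsResolving (functigraph ⊤ f) S) : (Sum.elim f id '' S)ᶜ.Subsingleton := by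
  intro a ha b hb
  by_contra hab
  obtain ⟨w, hw, hne⟩ := hS (inr a) (inr b) (inr_injective.ne hab)
  exact hne (dist_top_inr_left_eq (fun h ↦ ha ⟨w, hw, h⟩) (fun h ↦ hb ⟨w, hw, h⟩))

theorem card_le_encard_add_one_of_isResolving {S : Set (V ⊕ V)}
    (hS : IsResolving (functigraph ⊤ f) S) : ENat.card V ≤ S.encard + 1 := by
  calc ENat.card V
    _ = (Sum.elim f id '' S).encard + (Sum.elim f id '' S)ᶜ.encard := by
      rw [encard_add_encard_compl, encard_univ]
    _ ≤ S.encard + 1 :=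
      add_le_add (encard_image_le _ S)
        (encard_le_one_iff_subsingleton.2 (subsingleton_compl_image_of_isResolving hS))

end Complete

end functigraph

theorem stmt4_general [Fintype V] (hV : 3 ≤ Fintype.card V) {σ : V → V} (hσ : σ.Injective) :
    metricDim (functigraph ⊤ σ) = Fintype.card V - 1 := by
  refine IsLeast.csInf_eq ⟨?_, ?_⟩
  · obtain ⟨z⟩ : Nonempty V := Fintype.card_pos_iff.1 (by lia)
    have hV' : 3 ≤ ENat.card V := by
      rw [ENat.card_eq_coe_fintype_card]
      exact_mod_cast hV
    refine ⟨inr '' {z}ᶜ, functigraph.isResolving_image_inr_compl_singleton hV' hσ z,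
      toFinite _, ?_⟩
    rw [ncard_image_of_injective _ inr_injective, ncard_compl, ncard_singleton,
      Nat.card_eq_fintype_card]
  · rintro _ ⟨S, hS, hfin, rfl⟩
    have hcard := functigraph.card_le_encard_add_one_of_isResolving hS
    rw [ENat.card_eq_coe_fintype_card, ← hfin.cast_ncard_eq] at hcard
    exact Nat.sub_le_of_le_add (by exact_mod_cast hcard)

theorem stmt4 (n : ℕ) (hn : 3 <= n) (σ : Fin n -> Fin n)
    (hσ : Function.Bijective σ) :
    metricDim (functigraph (⊤ : SimpleGraph (Fin n)) σ) = n - 1 := by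
  simpa using stmt4_general (by simpa using hn) hσ.injective
end

section
/- For m, n ≥ 3, let H₁ = Kₘ and H₂ = Kₙ be vertex-disjoint complete graphs, let v₁ be a fixed vertex of H₂, and let 𝒢 be the graph with vertex set V(H₁) ∪ V(H₂) and edge set E(H₁) ∪ E(H₂) ∪ {u v₁ : u ∈ V(H₁)} (i.e., every vertex of H₁ is joined to the single vertex v₁ of H₂). Then dim(𝒢) = m + n − 3. -/
/-- Two complete graphs `K_m` and `K_n`, with every vertex of the first joined to
the single fixed vertex `v1` of the second. -/
def joinedCompletes (m n : ℕ) (v1 : Fin n) : SimpleGraph (Fin m ⊕ Fin n) :=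
  SimpleGraph.fromRel (fun x y =>
    match x, y with
    | Sum.inl a, Sum.inl b => a ≠ b
    | Sum.inr a, Sum.inr b => a ≠ b
    | Sum.inl _, Sum.inr b => b = v1
    | Sum.inr _, Sum.inl _ => False)

/-!
A vertex other than two twins has the same distance to both, so a resolving set misses at most one
vertex of each class of twins. Hence, if some transversal of the twin classes has a resolving
complement, the metric dimension is the number of vertices minus the number of classes. In
`joinedCompletes m n v1` the classes are `H₁`, `{v₁}` and `H₂ \ {v₁}`. A vertex kept from `H₁` is
adjacent to exactly two of the three representatives, and so is a vertex kept from `H₂ \ {v₁}`;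
together the two separate all three. The same argument works for two or more cliques around a
central one.
-/

section Twins

variable {V W κ : Type*} {H : SimpleGraph V} {H' : SimpleGraph W} {S : Set V} {x y w : V}

lemma edist_hom_le (f : H →g H') (x y : V) : H'.edist (f x) (f y) ≤ H.edist x y :=
  le_iInf fun p => by simpa only [SimpleGraph.Walk.length_map] using (p.map f).edist_le

lemma dist_iso (e : H ≃g H') (x y : V) : H'.dist (e x) (e y) = H.dist x y := by
  have hle : H.edist x y ≤ H'.edist (e x) (e y) := by
    simpa using edist_hom_le e.symm.toHom (e x) (e y)
  exact congrArg ENat.toNat ((edist_hom_le e.toHom x y).antisymm hle)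

/-- `x` and `y` are twins: they have the same neighbours apart from themselves. Adjacent (true) and
non-adjacent (false) twins are both allowed, and every vertex is a twin of itself. -/
def AreTwins (H : SimpleGraph V) (x y : V) : Prop :=
  ∀ w, w ≠ x → w ≠ y → (H.Adj x w ↔ H.Adj y w)

lemma AreTwins.adj_swap_iff [DecidableEq V] (h : AreTwins H x y) (u v : V) :
    H.Adj (Equiv.swap x y u) (Equiv.swap x y v) ↔ H.Adj u v := by
  have hcomm := H.adj_comm
  have hirrefl (z : V) : ¬H.Adj z z := H.irrefl
  unfold AreTwins at h
  grind

lemma AreTwins.dist_eq (h : AreTwins H x y) (hx : w ≠ x) (hy : w ≠ y) :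
    H.dist x w = H.dist y w := by
  classical
  let e : H ≃g H := ⟨Equiv.swap x y, h.adj_swap_iff _ _⟩
  have hex : e x = y := Equiv.swap_apply_left x y
  have hew : e w = w := Equiv.swap_apply_of_ne_of_ne hx hy
  rw [← dist_iso e x w, hex, hew]

lemma IsResolving.injOn_compl {f : V → κ} (hS : IsResolving H S)
    (hf : ∀ x y, f x = f y → AreTwins H x y) : Set.InjOn f Sᶜ := by
  intro x hx y hy hxy
  by_contra hne
  obtain ⟨w, hw, hdist⟩ := hS x y hne
  exact hdist ((hf x y hxy).dist_eq (ne_of_mem_of_not_mem hw hx) (ne_of_mem_of_not_mem hw hy))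

lemma IsResolving.card_le_ncard_add_card [Finite V] [Finite κ] {f : V → κ} (hS : IsResolving H S)
    (hf : ∀ x y, f x = f y → AreTwins H x y) : Nat.card V ≤ S.ncard + Nat.card κ := by
  rw [← Set.ncard_add_ncard_compl S, ← Set.ncard_univ κ]
  gcongr
  exact Set.ncard_le_ncard_of_injOn f (fun _ _ => Set.mem_univ _) (hS.injOn_compl hf)

lemma metricDim_eq_ncard (hS : IsResolving H S) (hfin : S.Finite)
    (hmin : ∀ T, IsResolving H T → T.Finite → S.ncard ≤ T.ncard) : metricDim H = S.ncard := by
  refine le_antisymm (Nat.sInf_le ⟨S, hS, hfin, rfl⟩) (le_csInf ⟨_, S, hS, hfin, rfl⟩ ?_)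
  rintro _ ⟨T, hT, hTfin, rfl⟩
  exact hmin T hT hTfin

lemma metricDim_add_card_of_twins [Finite V] {f : V → κ} {r : κ → V}
    (hf : ∀ x y, f x = f y → AreTwins H x y) (hr : Function.Injective r)
    (hres : IsResolving H (Set.range r)ᶜ) : metricDim H + Nat.card κ = Nat.card V := by
  have : Finite κ := .of_injective r hr
  have hcard : (Set.range r)ᶜ.ncard + Nat.card κ = Nat.card V := by
    rw [← Set.ncard_range_of_injective hr, add_comm, Set.ncard_add_ncard_compl]
  rw [metricDim_eq_ncard hres (Set.toFinite _), hcard]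
  intro T hT _
  have := hT.card_le_ncard_add_card hf
  omega

lemma isResolving_of_adj (hH : H.Preconnected)
    (hS : ∀ x ∉ S, ∀ y ∉ S, x ≠ y → ∃ w ∈ S, ¬(H.Adj x w ↔ H.Adj y w)) : IsResolving H S := by
  intro x y hne
  by_cases hx : x ∈ S
  · exact ⟨x, hx, by simpa using ((hH y x).pos_dist_of_ne hne.symm).ne⟩
  by_cases hy : y ∈ S
  · exact ⟨y, hy, by simpa using ((hH x y).pos_dist_of_ne hne).ne'⟩
  obtain ⟨w, hw, hadj⟩ := hS x hx y hy hne
  refine ⟨w, hw, fun hdist => hadj ?_⟩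
  rw [← SimpleGraph.dist_eq_one_iff_adj, ← SimpleGraph.dist_eq_one_iff_adj, hdist]

end Twins

section Windmill

variable {V ι : Type*} {H : SimpleGraph V} {blade : V → Option ι}

lemma exists_not_eq_none_or_eq_some_iff [Nontrivial ι] {k l : Option ι} (hkl : k ≠ l) :
    ∃ i : ι, ¬(k = none ∨ k = some i ↔ l = none ∨ l = some i) := by
  rcases k with _ | i <;> rcases l with _ | j
  · exact absurd rfl hkl
  · obtain ⟨i, hi⟩ := exists_ne j
    exact ⟨i, by simp [hi.symm]⟩
  · obtain ⟨j, hj⟩ := exists_ne i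
    exact ⟨j, by simp [hj.symm]⟩
  · exact ⟨i, by simpa using hkl.symm⟩

/-- `H` is a generalized windmill graph: the join of a nonempty complete graph, its hub, with a
disjoint union of complete graphs on at least two vertices each, its blades. The hub is encoded as
the fibre of `blade` over `none`, and the blade with index `i` as the fibre over `some i`. -/
structure IsWindmill (H : SimpleGraph V) (blade : V → Option ι) : Prop where
  adj_iff : ∀ x y, H.Adj x y ↔ x ≠ y ∧ (blade x = none ∨ blade y = none ∨ blade x = blade y)
  hub_nonempty : (blade ⁻¹' {none}).Nonempty
  blade_nontrivial : ∀ i, (blade ⁻¹' {some i}).Nontrivial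

namespace IsWindmill

lemma areTwins (h : IsWindmill H blade) {x y : V} (hxy : blade x = blade y) : AreTwins H x y := by
  intro w hx hy
  simp only [h.adj_iff, hxy, hx.symm, hy.symm, ne_eq, not_false_eq_true]

lemma connected (h : IsWindmill H blade) : H.Connected := by
  obtain ⟨c, hc⟩ := h.hub_nonempty
  exact .of_isUniversal fun x hcx => (h.adj_iff c x).2 ⟨hcx, .inl hc⟩

lemma surjective (h : IsWindmill H blade) : Function.Surjective blade
  | none => h.hub_nonempty
  | some i => (h.blade_nontrivial i).nonempty

lemma adj_iff_of_blade_eq_some (h : IsWindmill H blade) {x w : V} {i : ι}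
    (hw : blade w = some i) (hne : x ≠ w) : H.Adj x w ↔ blade x = none ∨ blade x = some i := by
  simp [h.adj_iff, hw, hne]

lemma isResolving_compl_range [Nontrivial ι] (h : IsWindmill H blade) {r : Option ι → V}
    (hr : Function.RightInverse r blade) : IsResolving H (Set.range r)ᶜ := by
  have mem_compl {w : V} {k : Option ι} (hw : blade w = k) (hne : w ≠ r k) :
      w ∈ (Set.range r)ᶜ := by
    rintro ⟨l, rfl⟩
    exact hne (congrArg r ((hr l).symm.trans hw))
  refine isResolving_of_adj h.connected.preconnected fun x hx y hy hne => ?_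
  obtain ⟨k, rfl⟩ := not_not.1 hx
  obtain ⟨l, rfl⟩ := not_not.1 hy
  obtain ⟨i, hi⟩ := exists_not_eq_none_or_eq_some_iff (ne_of_apply_ne r hne)
  obtain ⟨w, hw, hwr⟩ := (h.blade_nontrivial i).exists_ne (r (some i))
  have hwS : w ∈ (Set.range r)ᶜ := mem_compl hw hwr
  refine ⟨w, hwS, ?_⟩
  rwa [h.adj_iff_of_blade_eq_some hw (ne_of_mem_of_not_mem hwS hx).symm,
    h.adj_iff_of_blade_eq_some hw (ne_of_mem_of_not_mem hwS hy).symm, hr k, hr l]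

theorem metricDim_add_card [Finite V] [Nontrivial ι] (h : IsWindmill H blade) :
    metricDim H + Nat.card (Option ι) = Nat.card V := by
  obtain ⟨r, hr⟩ := h.surjective.hasRightInverse
  exact metricDim_add_card_of_twins (fun _ _ => h.areTwins) hr.injective
    (h.isResolving_compl_range hr)

end IsWindmill

end Windmill

section JoinedCompletes

variable {m n : ℕ}

/-- The windmill structure of `joinedCompletes m n v1`: the hub is `v1`, blade `false` is the first
complete graph, and blade `true` is the second one without `v1`. -/
def joinedCompletesBlade (v1 : Fin n) : Fin m ⊕ Fin n → Option Bool
  | .inl _ => some false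
  | .inr b => if b = v1 then none else some true

lemma joinedCompletes_adj_iff (v1 : Fin n) (x y : Fin m ⊕ Fin n) :
    (joinedCompletes m n v1).Adj x y ↔ x ≠ y ∧ (joinedCompletesBlade v1 x = none ∨
      joinedCompletesBlade v1 y = none ∨
      joinedCompletesBlade v1 x = joinedCompletesBlade v1 y) := by
  rcases x with a | a <;> rcases y with b | b <;>
    simp only [joinedCompletes, SimpleGraph.fromRel_adj, joinedCompletesBlade] <;> grind

lemma isWindmill_joinedCompletes (hm : 2 ≤ m) (hn : 3 ≤ n) (v1 : Fin n) :
    IsWindmill (joinedCompletes m n v1) (joinedCompletesBlade v1) where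
  adj_iff := joinedCompletes_adj_iff v1
  hub_nonempty := ⟨.inr v1, by simp [joinedCompletesBlade]⟩
  blade_nontrivial
    | false => ⟨.inl ⟨0, by omega⟩, rfl, .inl ⟨1, by omega⟩, rfl, by simp⟩
    | true => by
      obtain ⟨b, hb, -⟩ := Fin.exists_ne_and_ne_of_two_lt v1 v1 hn
      obtain ⟨c, hc, hcb⟩ := Fin.exists_ne_and_ne_of_two_lt v1 b hn
      exact ⟨.inr b, by simp [joinedCompletesBlade, hb], .inr c,
        by simp [joinedCompletesBlade, hc], by simpa using hcb.symm⟩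

end JoinedCompletes

theorem stmt6_general (m n : ℕ) (hm : 2 ≤ m) (hn : 3 ≤ n) (v1 : Fin n) :
    metricDim (joinedCompletes m n v1) = m + n - 3 := by
  have hdim := (isWindmill_joinedCompletes hm hn v1).metricDim_add_card
  have hblades : Nat.card (Option Bool) = 3 := by simp
  have hverts : Nat.card (Fin m ⊕ Fin n) = m + n := by simp
  omega

theorem stmt6 (m n : ℕ) (hm : 3 <= m) (hn : 3 <= n) (v1 : Fin n) :
    metricDim (joinedCompletes m n v1) = m + n - 3 :=
  stmt6_general m n (by omega) hn v1
end

section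
/- Let Cₙ be the cycle of order n ≥ 6 with two disjoint copies G₁ (vertices u₁,…,uₙ) and G₂ (vertices v₁,…,vₙ), and let f₀ : V(G₁) → V(G₂) be the constant function f₀(uᵢ) = v₁ for all i. Let S be a minimum resolving set of C(Cₙ, f₀). Then for each vertex uᵢ ∈ S ∩ V(G₁), letting A = N(uᵢ) ∩ V(G₁) be the set of the two cycle-neighbors of uᵢ in G₁, at least one vertex of (N[A] − {uᵢ}) ∩ V(G₁) belongs to S, where N[A] is the closed neighborhood of A in C(Cₙ, f₀). -/
/-!
Once `f` is constant, every vertex of the first copy sees a vertex of the second copy only through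
the edge to the common value of `f`, hence at a distance which does not depend on the starting
vertex, and any two vertices of the first copy are at distance at most `2`. So two vertices `p ≠ q`
of the first copy are resolved only by one of `p`, `q`, or by a vertex of the first copy adjacent
to exactly one of them. When `p` and `q` are neighbours of `a`, such a vertex lies in `N[A]` and
differs from `a`, because `a` is adjacent to both.
-/

namespace functigraph

section Adjacency

variable {V : Type*} {G : SimpleGraph V} {f : V → V} {x y : V}

@[simp]
lemma adj_inl_inl : (functigraph G f).Adj (Sum.inl x) (Sum.inl y) ↔ G.Adj x y := by
  simpa [functigraph, G.adj_comm y x] using SimpleGraph.Adj.ne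

@[simp]
lemma adj_inl_inr_s12 : (functigraph G f).Adj (Sum.inl x) (Sum.inr y) ↔ f x = y := by
  simp [functigraph]

end Adjacency

section CommonImage

variable {V : Type*} {G : SimpleGraph V} {f : V → V}

lemma dist_inl_inl_eq_two {x y : V} (hf : f x = f y) (hne : x ≠ y) (hadj : ¬G.Adj x y) :
    (functigraph G f).dist (Sum.inl x) (Sum.inl y) = 2 := by
  have hx : (functigraph G f).Adj (Sum.inl x) (Sum.inr (f x)) := adj_inl_inr_s12.2 rfl
  have hy : (functigraph G f).Adj (Sum.inl y) (Sum.inr (f x)) := adj_inl_inr_s12.2 hf.symm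
  let throughImage := hx.toWalk.append hy.symm.toWalk
  have hle : (functigraph G f).dist (Sum.inl x) (Sum.inl y) ≤ 2 :=
    SimpleGraph.dist_le throughImage
  have hpos := throughImage.reachable.pos_dist_of_ne (Sum.inl_injective.ne hne)
  have hne_one : (functigraph G f).dist (Sum.inl x) (Sum.inl y) ≠ 1 := by
    rwa [Ne, SimpleGraph.dist_eq_one_iff_adj, adj_inl_inl]
  omega

lemma dist_inl_inl_eq_of_adj_iff {p q c : V} (hfp : f p = f c) (hfq : f q = f c)
    (hp : p ≠ c) (hq : q ≠ c) (hadj : G.Adj p c ↔ G.Adj q c) :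
    (functigraph G f).dist (Sum.inl p) (Sum.inl c) =
      (functigraph G f).dist (Sum.inl q) (Sum.inl c) := by
  by_cases hpc : G.Adj p c
  · rw [SimpleGraph.dist_eq_one_iff_adj.2 (adj_inl_inl.2 hpc),
      SimpleGraph.dist_eq_one_iff_adj.2 (adj_inl_inl.2 (hadj.1 hpc))]
  · rw [dist_inl_inl_eq_two hfp hp hpc, dist_inl_inl_eq_two hfq hq (mt hadj.2 hpc)]

end CommonImage

section ConstantFunction

variable {V : Type*} {G : SimpleGraph V} {v₀ : V}

lemma edist_inr_add_one_le_length {x y : V}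
    (w : (functigraph G fun _ ↦ v₀).Walk (Sum.inl x) (Sum.inr y)) :
    (functigraph G fun _ ↦ v₀).edist (Sum.inr v₀) (Sum.inr y) + 1 ≤ w.length := by
  generalize hs : (Sum.inl x : V ⊕ V) = s at w
  generalize ht : (Sum.inr y : V ⊕ V) = t at w
  induction w generalizing x with
  | nil => simp [← hs] at ht
  | @cons _ second _ hadj tail ih =>
    subst hs ht
    rw [SimpleGraph.Walk.length_cons, Nat.cast_succ]
    gcongr
    rcases second with x' | y'
    · exact le_self_add.trans (ih rfl rfl)
    · obtain rfl := adj_inl_inr_s12.1 hadj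
      exact tail.edist_le

lemma edist_inl_inr (x y : V) :
    (functigraph G fun _ ↦ v₀).edist (Sum.inl x) (Sum.inr y) =
      (functigraph G fun _ ↦ v₀).edist (Sum.inr v₀) (Sum.inr y) + 1 := by
  have hx : (functigraph G fun _ ↦ v₀).edist (Sum.inl x) (Sum.inr v₀) = 1 :=
    SimpleGraph.edist_eq_one_iff_adj.2 (adj_inl_inr_s12.2 rfl)
  refine le_antisymm ?_ (le_iInf edist_inr_add_one_le_length)
  rw [add_comm, ← hx]
  exact SimpleGraph.edist_triangle

lemma dist_inl_inr_eq (p q y : V) :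
    (functigraph G fun _ ↦ v₀).dist (Sum.inl p) (Sum.inr y) =
      (functigraph G fun _ ↦ v₀).dist (Sum.inl q) (Sum.inr y) := by
  simp only [SimpleGraph.dist, edist_inl_inr]

lemma exists_inl_mem_of_isResolving {S : Set (V ⊕ V)}
    (hS : IsResolving (functigraph G fun _ ↦ v₀) S) {p q : V} (hpq : p ≠ q) :
    ∃ c, Sum.inl c ∈ S ∧ (p = c ∨ q = c ∨ ¬(G.Adj p c ↔ G.Adj q c)) := by
  obtain ⟨c | y, hmem, hdist⟩ := hS _ _ (Sum.inl_injective.ne hpq)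
  · refine ⟨c, hmem, ?_⟩
    contrapose! hdist
    exact dist_inl_inl_eq_of_adj_iff rfl rfl hdist.1 hdist.2.1 hdist.2.2
  · exact absurd (dist_inl_inr_eq p q y) hdist

end ConstantFunction

end functigraph

lemma nontrivial_neighborSet_cycGraph {n : ℕ} (h₁ : n ≠ 1) (h₂ : n ≠ 2) (a : ZMod n) :
    ((cycGraph n).neighborSet a).Nontrivial := by
  have : Nontrivial (ZMod n) := ZMod.nontrivial_iff.2 h₁
  have htwo : (2 : ZMod n) ≠ 0 := Ring.two_ne_zero (by rwa [ZMod.ringChar_zmod_n])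
  refine ⟨a + 1, ?_, a - 1, ?_, fun h ↦ htwo (by linear_combination h)⟩ <;>
    simp [cycGraph, eq_sub_iff_add_eq]

open functigraph in
theorem stmt12_general {V : Type*} {G : SimpleGraph V} {v₀ : V} {S : Set (V ⊕ V)}
    (hres : IsResolving (functigraph G fun _ ↦ v₀) S)
    {a : V} (ha : (G.neighborSet a).Nontrivial) :
    ∃ x ∈ (closedNbhd (functigraph G fun _ ↦ v₀)
        ((functigraph G fun _ ↦ v₀).neighborSet (Sum.inl a) ∩
          Set.range Sum.inl) \ {Sum.inl a}) ∩ Set.range Sum.inl,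
      x ∈ S := by
  obtain ⟨p, hp, q, hq, hpq⟩ := ha
  rw [SimpleGraph.mem_neighborSet] at hp hq
  obtain ⟨c, hcS, hc⟩ := exists_inl_mem_of_isResolving hres hpq
  have hca : c ≠ a := by
    rintro rfl
    rcases hc with rfl | rfl | hc
    · exact hp.ne rfl
    · exact hq.ne rfl
    · exact hc (iff_of_true hp.symm hq.symm)
  have hneighbor {b : V} (hb : G.Adj a b) : Sum.inl b ∈
      (functigraph G fun _ ↦ v₀).neighborSet (Sum.inl a) ∩ Set.range Sum.inl :=
    ⟨(functigraph G fun _ ↦ v₀).mem_neighborSet _ _ |>.2 (adj_inl_inl.2 hb), b, rfl⟩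
  refine ⟨Sum.inl c, ⟨⟨?_, Sum.inl_injective.ne hca⟩, c, rfl⟩, hcS⟩
  rcases hc with rfl | rfl | hc
  · exact Or.inl (hneighbor hp)
  · exact Or.inl (hneighbor hq)
  · obtain hpc | hqc : G.Adj p c ∨ G.Adj q c := by tauto
    · exact Or.inr ⟨_, hneighbor hp, adj_inl_inl.2 hpc.symm⟩
    · exact Or.inr ⟨_, hneighbor hq, adj_inl_inl.2 hqc.symm⟩

theorem stmt12 (n : ℕ) (hn : 6 <= n) (S : Set (ZMod n ⊕ ZMod n))
    (hres : IsResolving (functigraph (cycGraph n) (fun _ => (0 : ZMod n))) S)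
    (hfin : S.Finite)
    (hmin : S.ncard = metricDim (functigraph (cycGraph n) (fun _ => (0 : ZMod n))))
    (a : ZMod n) (ha : Sum.inl a ∈ S) :
    ∃ x ∈ (closedNbhd (functigraph (cycGraph n) (fun _ => (0 : ZMod n)))
        ((functigraph (cycGraph n) (fun _ => (0 : ZMod n))).neighborSet (Sum.inl a) ∩
          Set.range Sum.inl) \ {Sum.inl a}) ∩ Set.range Sum.inl,
      x ∈ S :=
  stmt12_general hres (nontrivial_neighborSet_cycGraph (by omega) (by omega) a)
end
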